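/- Let a, b, b', c be complex numbers with c not a nonpositive integer, and let x, y be real numbers with |x| < 1 and |y| < 1 such that |x/(x−1)| < 1 and |y/(y−1)| < 1. Then F₁(a; b, b'; c; x, y) = (1−x)^{−b} (1−y)^{−b'} · F₁(c−a; b, b'; c; x/(x−1), y/(y−1)). -/

import Mathlib

noncomputable def poch (a : ℂ) (n : ℕ) : ℂ := ∏ i ∈ Finset.range n, (a + i)

/-- Appell series F₁(a;b,b';c;x,y). -/
noncomputable def appellF1 (a b b' c x y : ℂ) : ℂ :=
  ∑' p : ℕ × ℕ, poch a (p.1 + p.2) * poch b p.1 * poch b' p.2 /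
    (p.1.factorial * p.2.factorial * poch c (p.1 + p.2)) * x ^ p.1 * y ^ p.2

open Filter Topology Finset

lemma poch_zero (a : ℂ) : poch a 0 = 1 := by simp [poch]

lemma poch_succ (a : ℂ) (n : ℕ) : poch a (n + 1) = poch a n * (a + n) := by
  simp [poch, Finset.prod_range_succ]

lemma poch_add (a : ℂ) (m k : ℕ) : poch a (m + k) = poch a m * poch (a + m) k := by
  induction k with
  | zero => simp [poch_zero]
  | succ k ih =>
    rw [← add_assoc, poch_succ, ih, poch_succ]; push_cast; ring

lemma poch_ne_zero {c : ℂ} (hc : ∀ n : ℕ, c ≠ -(n : ℂ)) (n : ℕ) : poch c n ≠ 0 := by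
  unfold poch
  rw [Finset.prod_ne_zero_iff]
  intro i _ h
  exact hc i (eq_neg_of_add_eq_zero_left h)

lemma poch_one (n : ℕ) : poch 1 n = n.factorial := by
  induction n with
  | zero => simp [poch_zero]
  | succ k ih => rw [poch_succ, ih, Nat.factorial_succ]; push_cast; ring

lemma one_ok (n : ℕ) : (1 : ℂ) ≠ -(n : ℂ) := by
  intro h
  have h2 : ((n + 1 : ℕ) : ℂ) = 0 := by push_cast; rw [← sub_eq_zero] at h; linear_combination h
  exact Nat.succ_ne_zero n (by exact_mod_cast h2)

lemma poch_bound (a c : ℂ) (hc : ∀ n : ℕ, c ≠ -(n : ℂ)) (r : ℝ) (hr : 1 < r) :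
    ∃ C : ℝ, 0 < C ∧ ∀ n, ‖poch a n / poch c n‖ ≤ C * r ^ n := by
  have hev : ∀ᶠ n : ℕ in atTop, ‖a + n‖ ≤ r * ‖c + n‖ := by
    obtain ⟨N, hN⟩ := exists_nat_gt ((‖a‖ + r * ‖c‖) / (r - 1))
    filter_upwards [eventually_ge_atTop N] with n hn
    have h0 : (0:ℝ) < r - 1 := by linarith
    rw [div_lt_iff₀ h0] at hN
    have hn' : (N : ℝ) ≤ n := by exact_mod_cast hn
    have h1 : ‖a + n‖ ≤ ‖a‖ + n := by simpa using norm_add_le a (n : ℂ)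
    have h2 : (n : ℝ) ≤ ‖c + n‖ + ‖c‖ := by simpa using norm_sub_le (c + n) c
    nlinarith
  obtain ⟨N, hN⟩ := eventually_atTop.1 hev
  set C := ∑ i ∈ range (N + 1), ‖poch a i / poch c i‖ + 1 with hC
  have hs : 0 ≤ ∑ i ∈ range (N + 1), ‖poch a i / poch c i‖ :=
    Finset.sum_nonneg fun _ _ => norm_nonneg _
  have small : ∀ n, n ≤ N → ‖poch a n / poch c n‖ ≤ C * r ^ n := by
    intro n hn
    have h1 : ‖poch a n / poch c n‖ ≤ ∑ i ∈ range (N + 1), ‖poch a i / poch c i‖ :=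
      Finset.single_le_sum (f := fun i => ‖poch a i / poch c i‖) (fun _ _ => norm_nonneg _)
        (by simp; omega)
    have h2 : 1 ≤ r ^ n := one_le_pow₀ hr.le
    nlinarith
  refine ⟨C, by linarith, fun n => ?_⟩
  induction n with
  | zero => exact small 0 (by omega)
  | succ n ih =>
    by_cases hn : n + 1 ≤ N
    · exact small _ hn
    · have hcn : c + n ≠ 0 := fun h => hc n (eq_neg_of_add_eq_zero_left h)
      have hq : ‖(a + n) / (c + n)‖ ≤ r := by
        rw [norm_div, div_le_iff₀ (norm_pos_iff.2 hcn)]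
        exact hN n (by omega)
      rw [poch_succ, poch_succ, mul_div_mul_comm, norm_mul, pow_succ, ← mul_assoc]
      exact mul_le_mul ih hq (norm_nonneg _) (by positivity)

lemma poch_diff_sum (a c : ℂ) (hc : ∀ n : ℕ, c ≠ -(n : ℂ)) (M N s : ℕ) :
    ∑ ij ∈ antidiagonal N, (N.choose ij.1 : ℂ) *
      ((-1) ^ ij.1 * (poch (c - a) (s + ij.1) * poch a M / poch c (s + ij.1 + M))) =
    poch (c - a) s * poch a (M + N) / poch c (s + (M + N)) := by
  induction N generalizing s with
  | zero => simp
  | succ N ih =>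
    rw [Finset.sum_antidiagonal_choose_succ_mul
      (fun i _ => (-1) ^ i * (poch (c - a) (s + i) * poch a M / poch c (s + i + M)))]
    rw [ih s]
    have h := ih (s + 1)
    have e : ∑ ij ∈ antidiagonal N, (N.choose ij.2 : ℂ) *
      ((-1) ^ (ij.1 + 1) * (poch (c - a) (s + (ij.1 + 1)) * poch a M /
        poch c (s + (ij.1 + 1) + M))) =
       - ∑ ij ∈ antidiagonal N, (N.choose ij.1 : ℂ) *
      ((-1) ^ ij.1 * (poch (c - a) (s + 1 + ij.1) * poch a M / poch c (s + 1 + ij.1 + M))) := by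
      rw [← Finset.sum_neg_distrib]
      refine Finset.sum_congr rfl fun ij hij => ?_
      rw [HasAntidiagonal.mem_antidiagonal] at hij
      rw [Nat.choose_symm_of_eq_add hij.symm, show s + (ij.1 + 1) = s + 1 + ij.1 by ring]
      ring
    rw [e, h]
    rw [show s + 1 + (M + N) = s + (M + N) + 1 by ring, show s + (M + (N+1)) = s + (M + N) + 1 by ring,
      ← add_assoc M N 1, poch_succ, poch_succ, poch_succ]
    have h1 := poch_ne_zero hc (s + (M + N))
    have h2 : c + ((s + (M + N) : ℕ) : ℂ) ≠ 0 := fun h => hc _ (eq_neg_of_add_eq_zero_left h)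
    field_simp
    push_cast
    ring

lemma binom_series (b z : ℂ) (hz : ‖z‖ < 1) :
    HasSum (fun k : ℕ => poch b k / k.factorial * z ^ k) ((1 - z) ^ (-b)) := by
  have h := (Complex.one_div_one_sub_cpow_hasFPowerSeriesOnBall_zero b).hasSum (y := z)
    (by simpa [Metric.mem_eball, edist_zero_right, enorm_eq_nnnorm, ← NNReal.coe_lt_coe] using hz)
  simp only [zero_add, one_div, ← Complex.cpow_neg] at h
  refine (congrArg (fun f => HasSum f ((1 - z) ^ (-b))) (funext fun k => ?_)).mpr h
  rw [FormalMultilinearSeries.ofScalars_apply_eq, smul_eq_mul]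
  congr 1
  rw [← Ring.multichoose_eq]
  have h2 := Ring.factorial_nsmul_multichoose_eq_ascPochhammer b k
  rw [Polynomial.ascPochhammer_smeval_eq_eval] at h2
  have h3 : poch b k = (ascPochhammer ℂ k).eval b := by
    clear h h2
    induction k with
    | zero => simp [poch_zero]
    | succ k ih => rw [poch_succ, ascPochhammer_succ_eval, ih]
  rw [h3, ← h2, nsmul_eq_mul, mul_div_cancel_left₀]
  exact_mod_cast Nat.factorial_ne_zero k

/-- coefficient -/
noncomputable def cf (a b b' c : ℂ) (p : ℕ × ℕ) : ℂ :=
  poch a (p.1 + p.2) * poch b p.1 * poch b' p.2 /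
    (p.1.factorial * p.2.factorial * poch c (p.1 + p.2))

lemma cf_bound (a b b' c : ℂ) (hc : ∀ n : ℕ, c ≠ -(n : ℂ)) (r : ℝ) (hr : 1 < r) :
    ∃ C : ℝ, 0 < C ∧ ∀ p, ‖cf a b b' c p‖ ≤ C * (r ^ 2) ^ p.1 * (r ^ 2) ^ p.2 := by
  obtain ⟨C1, h1, H1⟩ := poch_bound a c hc r hr
  obtain ⟨C2, h2, H2⟩ := poch_bound b 1 one_ok r hr
  obtain ⟨C3, h3, H3⟩ := poch_bound b' 1 one_ok r hr
  refine ⟨C1 * C2 * C3, by positivity, fun p => ?_⟩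
  have e : cf a b b' c p = poch a (p.1 + p.2) / poch c (p.1 + p.2) *
      (poch b p.1 / poch 1 p.1) * (poch b' p.2 / poch 1 p.2) := by
    rw [cf, poch_one, poch_one]; ring
  rw [e, norm_mul, norm_mul]
  calc _ ≤ (C1 * r ^ (p.1 + p.2)) * (C2 * r ^ p.1) * (C3 * r ^ p.2) := by
        gcongr
        · exact H1 _
        · exact H2 _
        · exact H3 _
    _ = _ := by ring

lemma cf_summable (a b b' c : ℂ) (hc : ∀ n : ℕ, c ≠ -(n : ℂ)) (s t : ℝ) (hs : 0 ≤ s) (ht : 0 ≤ t)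
    (hs1 : s < 1) (ht1 : t < 1) :
    Summable fun p : ℕ × ℕ => ‖cf a b b' c p‖ * s ^ p.1 * t ^ p.2 := by
  have : ∃ r : ℝ, 1 < r ∧ r ^ 2 * s < 1 ∧ r ^ 2 * t < 1 := by
    have k1 : ∀ᶠ r : ℝ in 𝓝[>] 1, r ^ 2 * s < 1 :=
      ((by fun_prop : Continuous fun r : ℝ => r ^ 2 * s).continuousAt.eventually_lt_const
        (by simpa using hs1)).filter_mono nhdsWithin_le_nhds
    have k2 : ∀ᶠ r : ℝ in 𝓝[>] 1, r ^ 2 * t < 1 :=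
      ((by fun_prop : Continuous fun r : ℝ => r ^ 2 * t).continuousAt.eventually_lt_const
        (by simpa using ht1)).filter_mono nhdsWithin_le_nhds
    obtain ⟨r, h⟩ := (k1.and (k2.and self_mem_nhdsWithin)).exists
    exact ⟨r, h.2.2, h.1, h.2.1⟩
  obtain ⟨r, hr, h1, h2⟩ := this
  obtain ⟨C, hC, H⟩ := cf_bound a b b' c hc r hr
  have S := (summable_geometric_of_lt_one (by positivity) h1).mul_of_nonneg
    (summable_geometric_of_lt_one (by positivity) h2) (fun _ => by positivity)
    (fun _ => by positivity)
  refine Summable.of_nonneg_of_le (fun _ => by positivity) (fun p => ?_) (S.mul_left C)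
  calc _ ≤ (C * (r ^ 2) ^ p.1 * (r ^ 2) ^ p.2) * s ^ p.1 * t ^ p.2 := by
        gcongr; exact H p
    _ = _ := by rw [mul_pow, mul_pow]; ring

lemma appell_eq (a b b' c x y : ℂ) :
    appellF1 a b b' c x y = ∑' p : ℕ × ℕ, cf a b b' c p * x ^ p.1 * y ^ p.2 := rfl

lemma appell_symm (a b b' c x y : ℂ) : appellF1 a b b' c x y = appellF1 a b' b c y x := by
  unfold appellF1
  rw [← (Equiv.prodComm ℕ ℕ).tsum_eq]
  refine tsum_congr fun p => ?_
  simp only [Equiv.prodComm_apply, Prod.fst_swap, Prod.snd_swap]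
  rw [add_comm p.2 p.1]
  ring

lemma appell_diff (a b b' c y : ℂ) (hc : ∀ n : ℕ, c ≠ -(n : ℂ)) (hy : ‖y‖ < 1) :
    DifferentiableOn ℂ (fun x => appellF1 a b b' c x y) (Metric.ball 0 1) := by
  intro x hx
  rw [mem_ball_zero_iff] at hx
  obtain ⟨r, hr, hr1⟩ := exists_between hx
  have h := Complex.differentiableOn_tsum_of_summable_norm (U := Metric.ball (0:ℂ) r)
    (F := fun p x => cf a b b' c p * x ^ p.1 * y ^ p.2)
    (cf_summable a b b' c hc r ‖y‖ ((norm_nonneg _).trans hr.le) (norm_nonneg _) hr1 hy)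
    (fun p => by fun_prop) Metric.isOpen_ball (fun p w hw => by
      rw [mem_ball_zero_iff] at hw
      rw [norm_mul, norm_mul, norm_pow, norm_pow]
      gcongr)
  exact (h.differentiableAt (Metric.isOpen_ball.mem_nhds (by simpa using hr))).differentiableWithinAt

/-- quadruple series term -/
noncomputable def qt (a b b' c x y : ℂ) (t : (ℕ × ℕ) × (ℕ × ℕ)) : ℂ :=
  poch (c - a) (t.1.1 + t.1.2) / poch c (t.1.1 + t.1.2) *
  (poch b (t.1.1 + t.2.1) / poch 1 (t.1.1 + t.2.1) * ((t.1.1 + t.2.1).choose t.1.1 : ℂ)) *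
  (poch b' (t.1.2 + t.2.2) / poch 1 (t.1.2 + t.2.2) * ((t.1.2 + t.2.2).choose t.1.2 : ℂ)) *
  ((-1) ^ t.1.1 * (-1) ^ t.1.2) * (x ^ (t.1.1 + t.2.1) * y ^ (t.1.2 + t.2.2))

lemma qt_summable (a b b' c x y : ℂ) (hc : ∀ n : ℕ, c ≠ -(n : ℂ))
    (hx : ‖x‖ < 1 / 8) (hy : ‖y‖ < 1 / 8) : Summable (qt a b b' c x y) := by
  obtain ⟨C1, h1, H1⟩ := poch_bound (c - a) c hc 2 one_lt_two
  obtain ⟨C2, h2, H2⟩ := poch_bound b 1 one_ok 2 one_lt_two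
  obtain ⟨C3, h3, H3⟩ := poch_bound b' 1 one_ok 2 one_lt_two
  have gx := summable_geometric_of_lt_one (r := 8 * ‖x‖) (by positivity) (by linarith)
  have gy := summable_geometric_of_lt_one (r := 8 * ‖y‖) (by positivity) (by linarith)
  have g := gx.mul_of_nonneg gy (fun _ => by positivity) (fun _ => by positivity)
  have G := g.mul_of_nonneg g (fun _ => by positivity) (fun _ => by positivity)
  have hch : ∀ n k : ℕ, ‖(n.choose k : ℂ)‖ ≤ 2 ^ n := by
    intro n k
    rw [Complex.norm_natCast]
    exact_mod_cast Nat.choose_le_two_pow n k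
  refine Summable.of_norm_bounded (G.mul_left (C1 * C2 * C3)) fun t => ?_
  obtain ⟨⟨m, n⟩, ⟨k, l⟩⟩ := t
  simp only [qt, norm_mul, norm_pow, norm_neg, norm_one, one_pow, mul_one]
  calc _ ≤ (C1 * 2 ^ (m + n)) * (C2 * 2 ^ (m + k) * 2 ^ (m + k)) *
        (C3 * 2 ^ (n + l) * 2 ^ (n + l)) * (‖x‖ ^ (m + k) * ‖y‖ ^ (n + l)) := by
        gcongr
        · exact H1 _
        · exact H2 _
        · exact hch _ _
        · exact H3 _
        · exact hch _ _
    _ ≤ (C1 * 2 ^ ((m + k) + (n + l))) * (C2 * 2 ^ (m + k) * 2 ^ (m + k)) *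
        (C3 * 2 ^ (n + l) * 2 ^ (n + l)) * (‖x‖ ^ (m + k) * ‖y‖ ^ (n + l)) := by
        gcongr
        · norm_num
        · omega
        · omega
    _ = _ := by
      simp only [mul_pow, pow_add, show (8:ℝ) = 2 * 2 * 2 by norm_num]
      ring

lemma one_sub_cpow (x b : ℂ) (hx : x ≠ 1) (m : ℕ) :
    (-x) ^ m * (1 - x) ^ (-(b + m)) = (1 - x) ^ (-b) * (x / (x - 1)) ^ m := by
  have h : 1 - x ≠ 0 := sub_ne_zero.2 hx.symm
  rw [neg_add, ← sub_eq_add_neg, Complex.cpow_sub _ _ h, Complex.cpow_natCast,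
    show x / (x - 1) = (-x) / (1 - x) by rw [← neg_sub 1 x, div_neg, neg_div], div_pow]
  ring

lemma choose_id (m k : ℕ) : ((m + k).choose m : ℂ) / poch 1 (m + k) = 
    1 / (m.factorial * k.factorial) := by
  have h1 : (m.factorial : ℂ) ≠ 0 := by exact_mod_cast m.factorial_ne_zero
  have h2 : (k.factorial : ℂ) ≠ 0 := by exact_mod_cast k.factorial_ne_zero
  have h3 : ((m + k).factorial : ℂ) ≠ 0 := by exact_mod_cast (m + k).factorial_ne_zero
  rw [poch_one, div_eq_div_iff h3 (mul_ne_zero h1 h2), one_mul, ← mul_assoc]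
  have := Nat.add_choose_mul_factorial_mul_factorial m k
  rw [Nat.choose_symm_add]
  exact_mod_cast this

lemma hasSum_mul_aux (f g : ℕ → ℂ) (s t u : ℂ) (hf : HasSum f s) (hg : HasSum g t) :
    HasSum (fun q : ℕ × ℕ => u * (f q.1 * g q.2)) (u * (s * t)) :=
  (hf.mul hg (summable_mul_of_summable_norm hf.summable.norm hg.summable.norm)).mul_left u

lemma qt_fiber_right (a b b' c x y : ℂ) (hx : ‖x‖ < 1 / 8) (hy : ‖y‖ < 1 / 8) (m n : ℕ) :
    HasSum (fun q => qt a b b' c x y ((m, n), q)) ((1 - x) ^ (-b) * (1 - y) ^ (-b') *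
      (cf (c - a) b b' c (m, n) * (x / (x - 1)) ^ m * (y / (y - 1)) ^ n)) := by
  have hx1 : x ≠ 1 := by intro h; rw [h, norm_one] at hx; linarith
  have hy1 : y ≠ 1 := by intro h; rw [h, norm_one] at hy; linarith
  have s1 := binom_series (b + m) x (by linarith)
  have s2 := binom_series (b' + n) y (by linarith)
  have s := hasSum_mul_aux _ _ _ _ (cf (c - a) b b' c (m, n) * (-x) ^ m * (-y) ^ n) s1 s2
  have e : (1 - x) ^ (-b) * (1 - y) ^ (-b') *
    (cf (c - a) b b' c (m, n) * (x / (x - 1)) ^ m * (y / (y - 1)) ^ n) =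
    cf (c - a) b b' c (m, n) * (-x) ^ m * (-y) ^ n *
      ((1 - x) ^ (-(b + m)) * (1 - y) ^ (-(b' + n))) := by
    have e1 := one_sub_cpow x b hx1 m
    have e2 := one_sub_cpow y b' hy1 n
    calc _ = cf (c - a) b b' c (m, n) * ((1 - x) ^ (-b) * (x / (x - 1)) ^ m) *
          ((1 - y) ^ (-b') * (y / (y - 1)) ^ n) := by ac_rfl
      _ = _ := by rw [← e1, ← e2]; ac_rfl
  rw [e]
  have ef : (fun q => qt a b b' c x y ((m, n), q)) = fun q : ℕ × ℕ =>
      cf (c - a) b b' c (m, n) * (-x) ^ m * (-y) ^ n *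
      (poch (b + m) q.1 / q.1.factorial * x ^ q.1 *
        (poch (b' + n) q.2 / q.2.factorial * y ^ q.2)) := by
    funext q
    obtain ⟨k, l⟩ := q
    have c1 := choose_id m k
    have c2 := choose_id n l
    simp only [qt, cf]
    rw [div_mul_eq_mul_div (poch b (m + k)), mul_div_assoc (poch b (m + k)), c1,
      div_mul_eq_mul_div (poch b' (n + l)), mul_div_assoc (poch b' (n + l)),
      c2, poch_add b, poch_add b', neg_pow x, neg_pow y, pow_add, pow_add]
    simp only [div_eq_mul_inv, mul_inv, one_mul]
    ring
  rw [ef]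
  exact s

lemma qt_fiber_left (a b b' c x y : ℂ) (hc : ∀ n : ℕ, c ≠ -(n : ℂ)) (M N : ℕ) :
    ∑ ij ∈ antidiagonal M, ∑ kl ∈ antidiagonal N,
      qt a b b' c x y ((ij.1, kl.1), (ij.2, kl.2)) =
      cf a b b' c (M, N) * x ^ M * y ^ N := by
  have key : ∀ ij ∈ antidiagonal M, ∑ kl ∈ antidiagonal N,
      qt a b b' c x y ((ij.1, kl.1), (ij.2, kl.2)) =
      (poch b M / poch 1 M * (poch b' N / poch 1 N) * x ^ M * y ^ N) *
      ((M.choose ij.1 : ℂ) * ((-1) ^ ij.1 *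
        (poch (c - a) (0 + ij.1) * poch a N / poch c (0 + ij.1 + N)))) := by
    rintro ⟨m, k⟩ hmk
    rw [HasAntidiagonal.mem_antidiagonal] at hmk
    simp only at hmk
    have h := poch_diff_sum a c hc 0 N m
    simp only [zero_add] at h ⊢
    rw [← h, Finset.mul_sum, Finset.mul_sum, Finset.mul_sum]
    refine Finset.sum_congr rfl ?_
    rintro ⟨n, l⟩ hnl
    rw [HasAntidiagonal.mem_antidiagonal] at hnl
    simp only at hnl
    simp only [qt, hmk, hnl]
    simp only [add_zero, mul_one, poch_zero, div_eq_mul_inv]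
    ac_rfl
  rw [Finset.sum_congr rfl key, ← Finset.mul_sum, poch_diff_sum a c hc N M 0]
  simp only [cf, poch_zero, poch_one, zero_add, one_mul, add_comm N M]
  simp only [div_eq_mul_inv, mul_inv]
  ac_rfl

lemma fiber_set (M N : ℕ) :
    ((fun t : (ℕ × ℕ) × (ℕ × ℕ) => (t.1.1 + t.2.1, t.1.2 + t.2.2)) ⁻¹' {(M, N)}) =
      (((antidiagonal M ×ˢ antidiagonal N).map
        (Equiv.prodProdProdComm ℕ ℕ ℕ ℕ).toEmbedding : Finset _) :
        Set ((ℕ × ℕ) × (ℕ × ℕ))) := by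
  ext ⟨⟨m, n⟩, ⟨k, l⟩⟩
  rw [Finset.mem_coe, Finset.mem_map_equiv]
  simp [Finset.mem_product]

lemma local_eq (a b b' c x y : ℂ) (hc : ∀ n : ℕ, c ≠ -(n : ℂ))
    (hx : ‖x‖ < 1 / 8) (hy : ‖y‖ < 1 / 8) :
    appellF1 a b b' c x y = (1 - x) ^ (-b) * (1 - y) ^ (-b') *
      appellF1 (c - a) b b' c (x / (x - 1)) (y / (y - 1)) := by
  have S := (qt_summable a b b' c x y hc hx hy).hasSum
  have R := S.prod_fiberwise (g := fun p => (1 - x) ^ (-b) * (1 - y) ^ (-b') *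
      (cf (c - a) b b' c p * (x / (x - 1)) ^ p.1 * (y / (y - 1)) ^ p.2))
      (fun p => qt_fiber_right a b b' c x y hx hy p.1 p.2)
  have L := S.tsum_fiberwise (fun t => (t.1.1 + t.2.1, t.1.2 + t.2.2))
  rw [appell_eq, appell_eq, ← tsum_mul_left, R.tsum_eq, ← L.tsum_eq]
  refine tsum_congr ?_
  rintro ⟨M, N⟩
  rw [fiber_set, Finset.tsum_subtype', Finset.sum_map, Finset.sum_product]
  exact (qt_fiber_left a b b' c x y hc M N).symm

/-- domain -/
def dom : Set ℂ := Metric.ball 0 1 ∩ {z | z.re < 1 / 2}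

lemma dom_open : IsOpen dom :=
  Metric.isOpen_ball.inter (isOpen_lt Complex.continuous_re continuous_const)

lemma dom_conn : IsPreconnected dom :=
  ((convex_ball _ _).inter (convex_halfSpace_re_lt _)).isPreconnected

lemma dom_ne {z : ℂ} (hz : z ∈ dom) : z - 1 ≠ 0 := by
  intro h
  have h2 := hz.2
  rw [sub_eq_zero.1 h] at h2
  norm_num at h2

lemma dom_map {z : ℂ} (hz : z ∈ dom) : z / (z - 1) ∈ Metric.ball (0:ℂ) 1 := by
  rw [mem_ball_zero_iff, norm_div, div_lt_one (norm_pos_iff.2 (dom_ne hz))]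
  have h2 : z.re < 1 / 2 := hz.2
  rw [Complex.norm_def, Complex.norm_def]
  apply Real.sqrt_lt_sqrt (Complex.normSq_nonneg _)
  simp only [Complex.normSq_apply, Complex.sub_re, Complex.sub_im, Complex.one_re, Complex.one_im]
  nlinarith

lemma small_dom {z : ℂ} (hz : ‖z‖ < 1 / 8) : z ∈ dom := by
  refine ⟨by rw [mem_ball_zero_iff]; linarith, ?_⟩
  have := Complex.re_le_norm z
  show z.re < 1 / 2
  linarith

lemma continuation (a b b' c y : ℂ) (hc : ∀ n : ℕ, c ≠ -(n : ℂ)) (hy : y ∈ dom)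
    (h : ∀ x : ℂ, ‖x‖ < 1 / 8 → appellF1 a b b' c x y = (1 - x) ^ (-b) * (1 - y) ^ (-b') *
      appellF1 (c - a) b b' c (x / (x - 1)) (y / (y - 1))) :
    ∀ x ∈ dom, appellF1 a b b' c x y = (1 - x) ^ (-b) * (1 - y) ^ (-b') *
      appellF1 (c - a) b b' c (x / (x - 1)) (y / (y - 1)) := by
  have d1 : DifferentiableOn ℂ (fun x => appellF1 a b b' c x y) dom :=
    (appell_diff a b b' c y hc (mem_ball_zero_iff.1 hy.1)).mono Set.inter_subset_left
  have d2 : DifferentiableOn ℂ (fun x => (1 - x) ^ (-b) * (1 - y) ^ (-b') *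
      appellF1 (c - a) b b' c (x / (x - 1)) (y / (y - 1))) dom := by
    have d3 : DifferentiableOn ℂ (fun x : ℂ => x / (x - 1)) dom :=
      DifferentiableOn.div (by fun_prop) (by fun_prop) (fun z hz => dom_ne hz)
    have d4 := (appell_diff (c - a) b b' c (y / (y - 1)) hc
      (mem_ball_zero_iff.1 (dom_map hy))).comp d3 (fun z hz => dom_map hz)
    refine DifferentiableOn.mul (DifferentiableOn.mul ?_ (by fun_prop)) d4
    refine DifferentiableOn.cpow (by fun_prop) (by fun_prop) fun z hz => ?_
    left
    have : z.re < 1 / 2 := hz.2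
    simp only [Complex.sub_re, Complex.one_re]
    linarith
  refine (d1.analyticOnNhd dom_open).eqOn_of_preconnected_of_eventuallyEq
    (d2.analyticOnNhd dom_open) dom_conn (small_dom (z := 0) (by norm_num)) ?_
  filter_upwards [Metric.ball_mem_nhds (0:ℂ) (show (0:ℝ) < 1 / 8 by norm_num)] with x hx
  exact h x (mem_ball_zero_iff.1 hx)

lemma real_dom {x : ℝ} (hx : |x| < 1) (hx' : |x / (x - 1)| < 1) : (x : ℂ) ∈ dom := by
  have h1 := abs_lt.1 hx
  refine ⟨by simpa using hx, ?_⟩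
  show (x : ℂ).re < 1 / 2
  rw [Complex.ofReal_re]
  have h2 := (abs_lt.1 hx').1
  rw [lt_div_iff_of_neg (by linarith)] at h2
  linarith

theorem appellF1_pfaff_transformation (a b b' c : ℂ) (x y : ℝ)
    (hc : ∀ n : ℕ, c ≠ -(n : ℂ))
    (hx : |x| < 1) (hy : |y| < 1)
    (hx' : |x / (x - 1)| < 1) (hy' : |y / (y - 1)| < 1) :
    appellF1 a b b' c x y =
      ((1 : ℂ) - x) ^ (-b) * ((1 : ℂ) - y) ^ (-b') *
        appellF1 (c - a) b b' c ((x : ℂ) / (x - 1)) ((y : ℂ) / (y - 1)) := by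
  have step : ∀ z : ℂ, ‖z‖ < 1 / 8 → ∀ w ∈ dom, appellF1 a b b' c w z =
      (1 - w) ^ (-b) * (1 - z) ^ (-b') *
      appellF1 (c - a) b b' c (w / (w - 1)) (z / (z - 1)) := fun z hz =>
    continuation a b b' c z hc (small_dom hz) fun w hw => local_eq a b b' c w z hc hw hz
  have h := continuation a b' b c x hc (real_dom hx hx') (fun z hz => by
    rw [appell_symm, step z hz x (real_dom hx hx'), appell_symm (c - a) b]
    ring) y (real_dom hy hy')
  rw [appell_symm, h, appell_symm (c - a) b]
  ring
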